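/- arXiv:2410.05539 — 2 statements merged into one kernel-verified Lean document; each statement's English description precedes it below -/
import Mathlib

section
/- Let ρ ∈ (0,1). For each α ∈ (0,1), the equation ρ·(α + d^{α+1}) = (α+1)·d has a unique solution d*(α) ∈ (0,ρ), and the map α ↦ d*(α) is strictly increasing on (0,1): if 0 < α₁ < α₂ < 1 then d*(α₁) < d*(α₂). -/
/-!
The residual `ρ (α + d ^ (α + 1)) - (α + 1) d` is convex in each of `d` and `α` separately. In `d`
it is positive at `0` and negative at `ρ`, so it has exactly one zero in between and is negative
from that zero up to `ρ`. In `α` it is negative at `0`, so once it vanishes it is positive for every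
larger `α`. Hence at the zero for `α₁` the residual for `α₂ > α₁` is positive, and the zero for `α₂`
lies further to the right.
-/

open Set

lemma le_of_convexOn_of_le_of_ge_of_lt {𝕜 β : Type*}
    [Field 𝕜] [LinearOrder 𝕜] [IsStrictOrderedRing 𝕜]
    [AddCommMonoid β] [LinearOrder β] [IsOrderedCancelAddMonoid β] [Module 𝕜 β]
    [PosSMulStrictMono 𝕜 β] {s : Set 𝕜} {f : 𝕜 → β} {x y b : 𝕜} {r : β}
    (hf : ConvexOn 𝕜 s f) (hx : x ∈ s) (hb : b ∈ s) (hyb : y < b)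
    (hfx : f x ≤ r) (hfy : r ≤ f y) (hfb : f b < r) : y ≤ x := by
  by_contra! hxy
  have hy : y ∈ openSegment 𝕜 x b := Ioo_subset_openSegment ⟨hxy, hyb⟩
  exact (hf.lt_left_of_right_lt hx hb hy (hfb.trans_le hfy)).not_ge (hfx.trans hfy)

lemma existsUnique_eq_of_convexOn_of_continuousOn {f : ℝ → ℝ} {a b r : ℝ} (hab : a ≤ b)
    (hf : ConvexOn ℝ (Icc a b) f) (hfc : ContinuousOn f (Icc a b)) (hfa : r < f a) (hfb : f b < r) :
    ∃! x, x ∈ Ioo a b ∧ f x = r := by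
  obtain ⟨x, hx, hfx⟩ := intermediate_value_Ioo' hab hfc ⟨hfb, hfa⟩
  refine ⟨x, ⟨hx, hfx⟩, fun y ⟨hy, hfy⟩ ↦ ?_⟩
  have hb : b ∈ Icc a b := right_mem_Icc.2 hab
  exact le_antisymm
    (le_of_convexOn_of_le_of_ge_of_lt hf (Ioo_subset_Icc_self hx) hb hy.2 hfx.le hfy.ge hfb)
    (le_of_convexOn_of_le_of_ge_of_lt hf (Ioo_subset_Icc_self hy) hb hx.2 hfy.le hfx.ge hfb)

/-- The left-hand side of the first-order condition for the demand function `s(d) = d ^ α`, divided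
by the factor `d ^ (α - 1)`, which is positive for `d > 0`. Its positive zeros are the
candidate optimal discount rates. -/
noncomputable def focResidual (ρ α d : ℝ) : ℝ :=
  ρ * (α + d ^ (α + 1)) - (α + 1) * d

section FocResidual

variable {ρ α α₁ α₂ d d₁ d₂ : ℝ}

lemma focResidual_eq_zero_iff :
    focResidual ρ α d = 0 ↔ ρ * (α + d ^ (α + 1)) = (α + 1) * d :=
  sub_eq_zero

lemma continuous_focResidual (hα : -1 ≤ α) : Continuous (focResidual ρ α) := by
  have hpow : Continuous fun d : ℝ ↦ d ^ (α + 1) :=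
    Real.continuous_rpow_const (by linarith)
  unfold focResidual
  fun_prop

lemma convexOn_focResidual (hρ : 0 ≤ ρ) (hα : 0 ≤ α) :
    ConvexOn ℝ (Ici 0) (focResidual ρ α) := by
  have hpow : ConvexOn ℝ (Ici 0) fun d : ℝ ↦ d ^ (α + 1) := convexOn_rpow (by linarith)
  have hlin : ConcaveOn ℝ (Ici 0) fun d : ℝ ↦ (α + 1) * d :=
    (concaveOn_id (convex_Ici 0)).smul (by linarith)
  exact (((convexOn_const α (convex_Ici 0)).add hpow).smul hρ).sub hlin

lemma convexOn_focResidual_exponent (hρ : 0 ≤ ρ) (hd : 0 < d) :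
    ConvexOn ℝ univ fun α ↦ focResidual ρ α d := by
  have hpow : ConvexOn ℝ univ fun α : ℝ ↦ d ^ (α + 1) :=
    (convexOn_rpow_left hd).translate_left 1
  have hid : ConvexOn ℝ univ fun α : ℝ ↦ α := convexOn_id convex_univ
  have hlin : ConcaveOn ℝ univ fun α : ℝ ↦ (α + 1) * d :=
    (((concaveOn_id convex_univ).add_const 1).smul hd.le).congr fun α _ ↦ mul_comm d (α + 1)
  exact ((hid.add hpow).smul hρ).sub hlin

lemma focResidual_zero_right_pos (hρ : 0 < ρ) (hα : 0 < α) : 0 < focResidual ρ α 0 := by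
  rw [focResidual, Real.zero_rpow (by linarith)]
  simpa using mul_pos hρ hα

lemma focResidual_self_neg (hρ₀ : 0 < ρ) (hρ₁ : ρ < 1) (hα : -1 < α) :
    focResidual ρ α ρ < 0 := by
  have hpow : ρ ^ (α + 1) < 1 := Real.rpow_lt_one hρ₀.le hρ₁ (by linarith)
  calc
    focResidual ρ α ρ = ρ * (ρ ^ (α + 1) - 1) := by rw [focResidual]; ring
    _ < 0 := mul_neg_of_pos_of_neg hρ₀ (by linarith)

lemma focResidual_zero_exponent_neg (hρ : ρ < 1) (hd : 0 < d) : focResidual ρ 0 d < 0 := by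
  calc
    focResidual ρ 0 d = (ρ - 1) * d := by simp [focResidual, sub_mul]
    _ < 0 := mul_neg_of_neg_of_pos (by linarith) hd

lemma existsUnique_focResidual_eq_zero (hρ₀ : 0 < ρ) (hρ₁ : ρ < 1) (hα : 0 < α) :
    ∃! d, d ∈ Ioo 0 ρ ∧ focResidual ρ α d = 0 :=
  existsUnique_eq_of_convexOn_of_continuousOn hρ₀.le
    ((convexOn_focResidual hρ₀.le hα.le).subset Icc_subset_Ici_self (convex_Icc 0 ρ))
    (continuous_focResidual (by linarith)).continuousOn
    (focResidual_zero_right_pos hρ₀ hα) (focResidual_self_neg hρ₀ hρ₁ (by linarith))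

lemma focResidual_pos_of_exponent_lt (hρ₀ : 0 ≤ ρ) (hρ₁ : ρ < 1) (hα₁ : 0 < α₁)
    (hα : α₁ < α₂) (hd : 0 < d) (h : focResidual ρ α₁ d = 0) : 0 < focResidual ρ α₂ d := by
  have hseg : α₁ ∈ openSegment ℝ 0 α₂ := Ioo_subset_openSegment ⟨hα₁, hα⟩
  have hneg : focResidual ρ 0 d < focResidual ρ α₁ d :=
    h ▸ focResidual_zero_exponent_neg hρ₁ hd
  exact h ▸ (convexOn_focResidual_exponent hρ₀ hd).lt_right_of_left_lt
    (mem_univ 0) (mem_univ α₂) hseg hneg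

lemma lt_of_focResidual_eq_zero_of_exponent_lt (hρ : ρ < 1) (hα₁ : 0 < α₁) (hα : α₁ < α₂)
    (hd₁ : d₁ ∈ Ioo 0 ρ) (h₁ : focResidual ρ α₁ d₁ = 0)
    (hd₂ : 0 ≤ d₂) (h₂ : focResidual ρ α₂ d₂ = 0) : d₁ < d₂ := by
  have hρ₀ : 0 < ρ := hd₁.1.trans hd₁.2
  have hα₂ : 0 < α₂ := hα₁.trans hα
  have hpos : 0 < focResidual ρ α₂ d₁ :=
    focResidual_pos_of_exponent_lt hρ₀.le hρ hα₁ hα hd₁.1 h₁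
  have hle : d₁ ≤ d₂ := le_of_convexOn_of_le_of_ge_of_lt (convexOn_focResidual hρ₀.le hα₂.le)
    hd₂ hρ₀.le hd₁.2 h₂.le hpos.le (focResidual_self_neg hρ₀ hρ (by linarith))
  exact hle.lt_of_ne fun h ↦ hpos.ne' (h ▸ h₂)

end FocResidual

theorem stmt_3_general (ρ : ℝ) (hρ0 : 0 < ρ) (hρ1 : ρ < 1) :
    (∀ α : ℝ, 0 < α →
      ∃! d : ℝ, (0 < d ∧ d < ρ) ∧ ρ * (α + d ^ (α + 1)) = (α + 1) * d) ∧
    (∀ α₁ α₂ d₁ d₂ : ℝ, 0 < α₁ → α₁ < α₂ →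
      (0 < d₁ ∧ d₁ < ρ) → ρ * (α₁ + d₁ ^ (α₁ + 1)) = (α₁ + 1) * d₁ →
      0 ≤ d₂ → ρ * (α₂ + d₂ ^ (α₂ + 1)) = (α₂ + 1) * d₂ →
      d₁ < d₂) := by
  simp only [← focResidual_eq_zero_iff]
  exact ⟨fun _ hα ↦ existsUnique_focResidual_eq_zero hρ0 hρ1 hα,
    fun _ _ _ _ hα₁ hα hd₁ h₁ hd₂ h₂ ↦
      lt_of_focResidual_eq_zero_of_exponent_lt hρ1 hα₁ hα hd₁ h₁ hd₂ h₂⟩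

/-- For ρ ∈ (0,1), the equation ρ·(α + d^(α+1)) = (α+1)·d has a unique
solution d*(α) ∈ (0,ρ) for each α ∈ (0,1), and α ↦ d*(α) is strictly increasing. -/
theorem stmt_3 (ρ : ℝ) (hρ0 : 0 < ρ) (hρ1 : ρ < 1) :
    (∀ α : ℝ, 0 < α → α < 1 →
      ∃! d : ℝ, (0 < d ∧ d < ρ) ∧ ρ * (α + d ^ (α + 1)) = (α + 1) * d) ∧
    (∀ α₁ α₂ d₁ d₂ : ℝ, 0 < α₁ → α₁ < α₂ → α₂ < 1 →
      (0 < d₁ ∧ d₁ < ρ) → ρ * (α₁ + d₁ ^ (α₁ + 1)) = (α₁ + 1) * d₁ →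
      (0 < d₂ ∧ d₂ < ρ) → ρ * (α₂ + d₂ ^ (α₂ + 1)) = (α₂ + 1) * d₂ →
      d₁ < d₂) := by
  obtain ⟨hunique, hmono⟩ := stmt_3_general ρ hρ0 hρ1
  exact ⟨fun α hα _ ↦ hunique α hα, fun α₁ α₂ d₁ d₂ hα₁ hα _ hd₁ h₁ hd₂ h₂ ↦
    hmono α₁ α₂ d₁ d₂ hα₁ hα hd₁ h₁ hd₂.1.le h₂⟩
end

section
/- Assume F is differentiable on (0,u) with derivative f and Assumption 1 holds. Let 0 < d < ρ < 1 and let x̄ ∈ (0,u) satisfy G(x̄) = 1 − ((1−ρ)d)/((1−d)ρ). Then for every x with x̄ ≤ x < u and every y with x < y < u: x − d·y + ρ·((1 − F(y))/(1 − F(x)))·((1−d)/(1−ρ))·y < ((1−d)/(1−ρ))·x. Consequently, sup_{y ∈ [x,u)} ( x − d·y + ρ·((1 − F(y))/(1 − F(x)))·((1−d)/(1−ρ))·y ) = ((1−d)/(1−ρ))·x, attained only at y = x. -/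
open Set MeasureTheory

/-!
On `[x, u)` the one-step payoff has derivative `-d + ρ κ r(z) (1 - G z)` in the new repayment `z`,
where `κ = (1 - d) / (1 - ρ)` and `r(z) = (1 - F z) / (1 - F x)`. The threshold is the value of `G`
at which this derivative vanishes when `r = 1`. As `d < ρ`, the threshold is positive, so
`G z = z f(z) / (1 - F z)` above it forces `f(z) > 0`. Hence `F` is strictly increasing, `r(z) < 1`
for `z > x`, and the payoff is strictly decreasing.
-/

/-- The generalized failure rate `x f(x) / (1 - F(x))` of a distribution with cdf `F` and density
`f`, written `G` in the paper. It takes the junk value `0` where `F x = 1`. -/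
noncomputable def generalizedFailureRate (F f : ℝ → ℝ) (x : ℝ) : ℝ :=
  x * f x / (1 - F x)

/-- The lender's net present value, per unit of repayment, of lending at a constant repayment amount
forever with discount factor `ρ`, where a repayment of `1` is bought by a loan of `d`. -/
noncomputable def annuityFactor (d ρ : ℝ) : ℝ :=
  (1 - d) / (1 - ρ)

/-- The one-step Bellman payoff of raising the repayment amount from `x` to `y` and then lending at
`y` forever, for a borrower whose income has cdf `F` and is known to be at least `x`. -/
noncomputable def raisePayoff (F : ℝ → ℝ) (d ρ x y : ℝ) : ℝ :=
  x - d * y + ρ * ((1 - F y) / (1 - F x)) * annuityFactor d ρ * y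

/-- The generalized failure rate from which on raising the repayment amount does not pay. -/
noncomputable def lendingThreshold (d ρ : ℝ) : ℝ :=
  1 - ((1 - ρ) * d) / ((1 - d) * ρ)

section Parameters

variable {d ρ : ℝ}

theorem annuityFactor_pos (hd : d < 1) (hρ : ρ < 1) : 0 < annuityFactor d ρ :=
  div_pos (sub_pos.2 hd) (sub_pos.2 hρ)

theorem one_sub_add_mul_annuityFactor (hρ : ρ ≠ 1) :
    1 - d + ρ * annuityFactor d ρ = annuityFactor d ρ := by
  have : 1 - ρ ≠ 0 := sub_ne_zero.2 hρ.symm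
  unfold annuityFactor
  field_simp
  ring

theorem mul_annuityFactor_mul_one_sub_lendingThreshold (hd : d ≠ 1) (hρ₀ : ρ ≠ 0) (hρ₁ : ρ ≠ 1) :
    ρ * annuityFactor d ρ * (1 - lendingThreshold d ρ) = d := by
  have : 1 - d ≠ 0 := sub_ne_zero.2 hd.symm
  have : 1 - ρ ≠ 0 := sub_ne_zero.2 hρ₁.symm
  unfold annuityFactor lendingThreshold
  field_simp
  ring

theorem lendingThreshold_pos (hd : d < 1) (hρ : 0 < ρ) (hdρ : d < ρ) :
    0 < lendingThreshold d ρ := by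
  have hden : 0 < (1 - d) * ρ := mul_pos (sub_pos.2 hd) hρ
  rw [lendingThreshold, sub_pos, div_lt_one hden]
  linarith

theorem lendingThreshold_lt_one (hd₀ : 0 < d) (hd₁ : d < 1) (hρ₀ : 0 < ρ) (hρ₁ : ρ < 1) :
    lendingThreshold d ρ < 1 :=
  sub_lt_self _ <|
    div_pos (mul_pos (sub_pos.2 hρ₁) hd₀) (mul_pos (sub_pos.2 hd₁) hρ₀)

end Parameters

section Pointwise

variable {F f : ℝ → ℝ} {d ρ x z : ℝ}

theorem pos_of_generalizedFailureRate_pos (hz : 0 ≤ z) (hFz : F z < 1)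
    (hG : 0 < generalizedFailureRate F f z) : 0 < f z :=
  pos_of_mul_pos_right ((div_pos_iff_of_pos_right (sub_pos.2 hFz)).1 hG) hz

theorem raisePayoff_self (hFx : F x ≠ 1) (hρ : ρ ≠ 1) :
    raisePayoff F d ρ x x = annuityFactor d ρ * x := by
  have hratio : (1 - F x) / (1 - F x) = 1 := div_self (sub_ne_zero.2 hFx.symm)
  calc raisePayoff F d ρ x x
      = (1 - d + ρ * annuityFactor d ρ) * x := by rw [raisePayoff, hratio]; ring
    _ = annuityFactor d ρ * x := by rw [one_sub_add_mul_annuityFactor hρ]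

theorem hasDerivWithinAt_raisePayoff {s : Set ℝ} (hF : HasDerivWithinAt F (f z) s z)
    (hFz : F z ≠ 1) :
    HasDerivWithinAt (raisePayoff F d ρ x)
      (-d + ρ * annuityFactor d ρ *
        ((1 - F z) / (1 - F x) * (1 - generalizedFailureRate F f z))) s z := by
  have hsurvival : (1 - F z) * (1 - generalizedFailureRate F f z) = 1 - F z - z * f z := by
    have : 1 - F z ≠ 0 := sub_ne_zero.2 hFz.symm
    unfold generalizedFailureRate
    field_simp
  have hcost := ((hasDerivWithinAt_id z s).const_mul d).const_sub x
  have hcontinuation :=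
    ((((hF.const_sub 1).div_const (1 - F x)).const_mul ρ).mul_const (annuityFactor d ρ)).mul
      (hasDerivWithinAt_id z s)
  refine (hcost.add hcontinuation).congr_deriv ?_
  rw [div_mul_eq_mul_div, hsurvival]
  simp only [id]
  ring

theorem raisePayoff_slope_neg (hd : 0 < d) (hdρ : d < ρ) (hρ : ρ < 1) (hF : F x < F z)
    (hFz : F z < 1) (hG : lendingThreshold d ρ ≤ generalizedFailureRate F f z) :
    -d + ρ * annuityFactor d ρ *
      ((1 - F z) / (1 - F x) * (1 - generalizedFailureRate F f z)) < 0 := by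
  have hρ₀ : 0 < ρ := hd.trans hdρ
  have hd₁ : d < 1 := hdρ.trans hρ
  have hFx : 0 < 1 - F x := sub_pos.2 (hF.trans hFz)
  have hratio_nonneg : 0 ≤ (1 - F z) / (1 - F x) := div_nonneg (sub_pos.2 hFz).le hFx.le
  have hratio_lt_one : (1 - F z) / (1 - F x) < 1 := (div_lt_one hFx).2 (sub_lt_sub_left hF 1)
  have hfactor : (1 - F z) / (1 - F x) * (1 - generalizedFailureRate F f z)
      < 1 - lendingThreshold d ρ :=
    calc (1 - F z) / (1 - F x) * (1 - generalizedFailureRate F f z)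
        ≤ (1 - F z) / (1 - F x) * (1 - lendingThreshold d ρ) :=
          mul_le_mul_of_nonneg_left (sub_le_sub_left hG 1) hratio_nonneg
      _ < 1 - lendingThreshold d ρ :=
          mul_lt_of_lt_one_left (sub_pos.2 (lendingThreshold_lt_one hd hd₁ hρ₀ hρ)) hratio_lt_one
  have hscaled := mul_lt_mul_of_pos_left hfactor (mul_pos hρ₀ (annuityFactor_pos hd₁ hρ))
  rw [mul_annuityFactor_mul_one_sub_lendingThreshold hd₁.ne hρ₀.ne' hρ.ne] at hscaled
  linarith

end Pointwise

section Interval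

variable {s : Set ℝ} {F f : ℝ → ℝ} {d ρ x : ℝ}

theorem strictMonoOn_of_generalizedFailureRate_pos (hs : s.OrdConnected)
    (hs₀ : ∀ z ∈ s, 0 ≤ z) (hF : ∀ z ∈ s, HasDerivWithinAt F (f z) s z) (hF₁ : ∀ z ∈ s, F z < 1)
    (hG : ∀ z ∈ s, 0 < generalizedFailureRate F f z) : StrictMonoOn F s :=
  strictMonoOn_of_hasDerivWithinAt_pos hs.convex (fun z hz => (hF z hz).continuousWithinAt)
    (fun z hz => (hF z (interior_subset hz)).mono interior_subset)
    fun z hz => pos_of_generalizedFailureRate_pos (hs₀ z (interior_subset hz))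
      (hF₁ z (interior_subset hz)) (hG z (interior_subset hz))

theorem strictAntiOn_raisePayoff (hs : s.OrdConnected) (hx : IsLeast s x) (hx₀ : 0 ≤ x)
    (hF : ∀ z ∈ s, HasDerivWithinAt F (f z) s z) (hF₁ : ∀ z ∈ s, F z < 1)
    (hd : 0 < d) (hdρ : d < ρ) (hρ : ρ < 1)
    (hG : ∀ z ∈ s, lendingThreshold d ρ ≤ generalizedFailureRate F f z) :
    StrictAntiOn (raisePayoff F d ρ x) s := by
  have hF_mono : StrictMonoOn F s :=
    strictMonoOn_of_generalizedFailureRate_pos hs (fun z hz => hx₀.trans (hx.2 hz)) hF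
      hF₁ fun z hz => (lendingThreshold_pos (hdρ.trans hρ) (hd.trans hdρ) hdρ).trans_le (hG z hz)
  have hderiv := fun z hz =>
    hasDerivWithinAt_raisePayoff (d := d) (ρ := ρ) (x := x) (hF z hz) (hF₁ z hz).ne
  refine strictAntiOn_of_hasDerivWithinAt_neg hs.convex
    (fun z hz => (hderiv z hz).continuousWithinAt)
    (fun z hz => (hderiv z (interior_subset hz)).mono interior_subset) fun z hz => ?_
  have hzs : z ∈ s := interior_subset hz
  have hxz : z ∈ Ioi x := by
    rw [← interior_Ici]
    exact interior_mono (fun _ h => hx.2 h) hz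
  exact raisePayoff_slope_neg hd hdρ hρ (hF_mono hx.1 hzs hxz) (hF₁ z hzs) (hG z hzs)

end Interval

theorem stmt_13_general {I : Set ℝ} (hI : I.OrdConnected) {F f : ℝ → ℝ}
    (hF : ∀ z, 0 < z → z ∈ I → HasDerivWithinAt F (f z) I z) (hF₁ : ∀ z ∈ I, F z < 1)
    (hG : MonotoneOn (generalizedFailureRate F f) {z | 0 < z ∧ z ∈ I})
    {d ρ : ℝ} (hd : 0 < d) (hdρ : d < ρ) (hρ : ρ < 1) {xbar : ℝ} (hxbar : 0 < xbar ∧ xbar ∈ I)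
    (hthreshold : lendingThreshold d ρ ≤ generalizedFailureRate F f xbar) :
    ∀ x, xbar ≤ x → x ∈ I →
      (∀ y, x < y → y ∈ I → raisePayoff F d ρ x y < annuityFactor d ρ * x) ∧
      IsGreatest (raisePayoff F d ρ x '' {y | x ≤ y ∧ y ∈ I}) (annuityFactor d ρ * x) ∧
      (∀ y, x ≤ y → y ∈ I → raisePayoff F d ρ x y = annuityFactor d ρ * x → y = x) := by
  intro x hx hxI
  have hx₀ : 0 < x := hxbar.1.trans_le hx
  have hleast : IsLeast {y | x ≤ y ∧ y ∈ I} x := ⟨⟨le_rfl, hxI⟩, fun _ hy => hy.1⟩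
  have hanti : StrictAntiOn (raisePayoff F d ρ x) {y | x ≤ y ∧ y ∈ I} :=
    strictAntiOn_raisePayoff (ordConnected_Ici.inter hI) hleast hx₀.le
      (fun z hz => (hF z (hx₀.trans_le hz.1) hz.2).mono fun _ hy => hy.2)
      (fun z hz => hF₁ z hz.2) hd hdρ hρ
      fun z hz => hthreshold.trans (hG hxbar ⟨hx₀.trans_le hz.1, hz.2⟩ (hx.trans hz.1))
  rw [← raisePayoff_self (F := F) (hF₁ x hxI).ne hρ.ne]
  exact ⟨fun y hxy hy => hanti hleast.1 ⟨hxy.le, hy⟩ hxy, hanti.antitoneOn.map_isLeast hleast,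
    fun y hxy hy heq => hanti.injOn ⟨hxy, hy⟩ hleast.1 heq⟩

/-- Above the lending threshold x̄ the constant lending policy is
optimal: for x̄ ≤ x < u and any y ∈ (x,u), the one-step payoff of raising the
repayment amount to y and then lending y forever is strictly less than
((1−d)/(1−ρ))·x; hence the supremum over y ∈ [x,u) equals ((1−d)/(1−ρ))·x and
is attained only at y = x. -/
theorem stmt_13 (u : EReal) (hu : 0 < u)
    (f : ℝ → ℝ) (hf_cont : Continuous f)
    (hf_pos : ∀ x : ℝ, 0 < x → (x : EReal) < u → 0 < f x)
    (hf_zero : ∀ x : ℝ, x ≤ 0 ∨ u ≤ (x : EReal) → f x = 0)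
    (hf_prob : ∫ t : ℝ, f t = 1)
    (F : ℝ → ℝ) (hF : ∀ x : ℝ, F x = ∫ t in (0:ℝ)..x, f t)
    (hF_deriv : ∀ x : ℝ, 0 < x → (x : EReal) < u → HasDerivAt F (f x) x)
    (hF_lt : ∀ x : ℝ, (x : EReal) < u → F x < 1)
    (G : ℝ → ℝ) (hG : ∀ x : ℝ, G x = x * f x / (1 - F x))
    -- Assumption 1:
    (hG_mono : StrictMonoOn G {x : ℝ | 0 ≤ x ∧ (x : EReal) < u})
    (hG_zero : G 0 = 0)
    (hG_lim : ∀ c : ℝ, c < 1 → ∃ x : ℝ, 0 ≤ x ∧ (x : EReal) < u ∧ c < G x)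
    (d ρ : ℝ) (hd : 0 < d) (hdρ : d < ρ) (hρ : ρ < 1)
    (xbar : ℝ) (hxbar : 0 < xbar ∧ (xbar : EReal) < u)
    (hxbar_eq : G xbar = 1 - ((1 - ρ) * d) / ((1 - d) * ρ)) :
    ∀ x : ℝ, xbar ≤ x → (x : EReal) < u →
      (∀ y : ℝ, x < y → (y : EReal) < u →
        x - d * y + ρ * ((1 - F y) / (1 - F x)) * ((1 - d) / (1 - ρ)) * y <
          ((1 - d) / (1 - ρ)) * x) ∧
      IsGreatest
        ((fun y => x - d * y + ρ * ((1 - F y) / (1 - F x)) * ((1 - d) / (1 - ρ)) * y) ''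
          {y : ℝ | x ≤ y ∧ (y : EReal) < u})
        (((1 - d) / (1 - ρ)) * x) ∧
      (∀ y : ℝ, x ≤ y → (y : EReal) < u →
        x - d * y + ρ * ((1 - F y) / (1 - F x)) * ((1 - d) / (1 - ρ)) * y =
          ((1 - d) / (1 - ρ)) * x → y = x) := by
  obtain rfl : G = generalizedFailureRate F f := funext hG
  exact stmt_13_general (ordConnected_Iio.preimage_mono EReal.coe_strictMono.monotone)
    (fun z hz hzu => (hF_deriv z hz hzu).hasDerivWithinAt) hF_lt
    (hG_mono.monotoneOn.mono fun _ hz => ⟨hz.1.le, hz.2⟩) hd hdρ hρ hxbar hxbar_eq.ge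
end
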